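/- Let E ⊆ ℤ^r, α ∈ ℤ^r and j ∈ {1,…,r}. Suppose there exist a subset J ⊆ {1,…,r} with j ∈ J and a maximal point β of E_J := pr_J(E) ⊆ ℤ^J such that β_j = α_j and β_i < α_i for all i ∈ J with i ≠ j. Then F̄_j(E, α) = ∅. -/

import Mathlib

/-- The fiber `F(E,α)`. -/
def Fib {ι : Type*} (E : Set (ι → ℤ)) (α : ι → ℤ) : Set (ι → ℤ) :=
  {β ∈ E | ∃ i, β i = α i ∧ ∀ j ≠ i, α j < β j}

/-- The closed fiber `F̄_i(E,α)`. -/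
def FibBar {ι : Type*} (E : Set (ι → ℤ)) (i : ι) (α : ι → ℤ) : Set (ι → ℤ) :=
  {β ∈ E | β i = α i ∧ ∀ j ≠ i, α j ≤ β j}

/-- Let `E ⊆ ℤ^r`, `α ∈ ℤ^r` and `j ∈ {1,…,r}`. If there are a
subset `J ∋ j` and a maximal point `β` of `E_J = pr_J(E)` with `β_j = α_j` and
`β_i < α_i` for all `i ∈ J`, `i ≠ j`, then `F̄_j(E,α) = ∅`. -/
theorem stmt_13 {r : ℕ} (E : Set (Fin r → ℤ)) (α : Fin r → ℤ) (j : Fin r)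
    (J : Set (Fin r)) (hjJ : j ∈ J) (β : J → ℤ)
    (hβE : β ∈ (fun g : Fin r → ℤ => fun s : J => g s) '' E)
    (hβmax : Fib ((fun g : Fin r → ℤ => fun s : J => g s) '' E) β = ∅)
    (hβj : β ⟨j, hjJ⟩ = α j)
    (hβlt : ∀ (i : Fin r) (hi : i ∈ J), i ≠ j → β ⟨i, hi⟩ < α i) :
    FibBar E j α = ∅ := by
  -- The projection to `J` of a point of the closed fiber would lie in the `j`-th fiber of `β`.
  refine Set.eq_empty_of_forall_notMem fun γ ⟨hγE, hγj, hγ⟩ => ?_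
  refine Set.eq_empty_iff_forall_notMem.mp hβmax (fun s : J => γ s)
    ⟨⟨γ, hγE, rfl⟩, ⟨j, hjJ⟩, hγj.trans hβj.symm, fun ⟨i, hi⟩ hne => ?_⟩
  have hij : i ≠ j := fun h => hne (Subtype.ext h)
  exact (hβlt i hi hij).trans_le (hγ i hij)
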